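/- arXiv:1903.06018 — 3 statements merged into one kernel-verified Lean document; each statement's English description precedes it below -/
import Mathlib

section
/- Let E, A_xx be M_x×M_x, A_xv be M_x×M_v, A_zv be M_z×M_v, B_x be M_x×M_u, B_z be M_z×M_u, and Φ be M_v×M_z complex matrices, with I_{M_z} − A_zv Φ invertible. Define B = B_x + A_xv Φ (I − A_zv Φ)^{-1} B_z. Then the matrix [E, B] has full row rank if and only if the matrix Ξ_∞^[c] = [[E, −B_x, −A_xv Φ],[0, −B_z, I_{M_z} − A_zv Φ]] has full row rank. -/
theorem frr_iff_aux {m n : Type*} [Fintype m] [Fintype n] (M : Matrix m n ℂ) :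
    M.rank = Fintype.card m ↔ ∀ v : m → ℂ, Matrix.vecMul v M = 0 → v = 0 := by
  have h1 : M.rank = Fintype.card m ↔ LinearIndependent ℂ M.row := by
    rw [linearIndependent_iff_card_eq_finrank_span, Matrix.rank_eq_finrank_span_row]
    exact eq_comm
  rw [h1, ← Matrix.vecMul_injective_iff]
  constructor
  · intro h v hv
    exact h (by simpa using hv)
  · intro h v w hvw
    have := h (v - w) (by rw [Matrix.sub_vecMul]; exact sub_eq_zero.mpr hvw)
    exact sub_eq_zero.mp this

/-- **Corollary 1, condition at infinity.** Under well-posedness (`I − Azv Φ`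
invertible), with `B = Bx + Axv Φ (I − Azv Φ)⁻¹ Bz`, the matrix `[E, B]` has full row
rank iff the matrix `Ξ∞⁽ᶜ⁾ = [[E, −Bx, −Axv Φ],[0, −Bz, I − Azv Φ]]` has full row
rank. -/
theorem controllability_infinity_iff_structured_matrix
    (Mx Mv Mz Mu : ℕ)
    (E : Matrix (Fin Mx) (Fin Mx) ℂ)
    (Axv : Matrix (Fin Mx) (Fin Mv) ℂ)
    (Azv : Matrix (Fin Mz) (Fin Mv) ℂ)
    (Bx : Matrix (Fin Mx) (Fin Mu) ℂ)
    (Bz : Matrix (Fin Mz) (Fin Mu) ℂ)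
    (Φ : Matrix (Fin Mv) (Fin Mz) ℂ)
    (hwp : IsUnit ((1 : Matrix (Fin Mz) (Fin Mz) ℂ) - Azv * Φ))
    (B : Matrix (Fin Mx) (Fin Mu) ℂ)
    (hB : B = Bx + Axv * Φ * ((1 : Matrix (Fin Mz) (Fin Mz) ℂ) - Azv * Φ)⁻¹ * Bz) :
    (Matrix.fromCols E B).rank = Mx ↔
    (Matrix.fromBlocks
        E (Matrix.fromCols (-Bx) (-(Axv * Φ)))
        0 (Matrix.fromCols (-Bz) ((1 : Matrix (Fin Mz) (Fin Mz) ℂ) - Azv * Φ))).rank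
      = Mx + Mz := by
  have hdet := (Matrix.isUnit_iff_isUnit_det _).mp hwp
  have a1 := frr_iff_aux (Matrix.fromCols E B)
  have a2 := frr_iff_aux (Matrix.fromBlocks
        E (Matrix.fromCols (-Bx) (-(Axv * Φ)))
        0 (Matrix.fromCols (-Bz) ((1 : Matrix (Fin Mz) (Fin Mz) ℂ) - Azv * Φ)))
  simp only [Fintype.card_sum, Fintype.card_fin] at a1 a2
  rw [a1, a2]
  clear a1 a2
  generalize (1 : Matrix (Fin Mz) (Fin Mz) ℂ) - Azv * Φ = W at *
  generalize Axv * Φ = C at *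
  have key : ∀ (x : Fin Mx → ℂ) (z : Fin Mz → ℂ),
      Matrix.vecMul (Sum.elim x z) (Matrix.fromBlocks E (Matrix.fromCols (-Bx) (-C))
        0 (Matrix.fromCols (-Bz) W)) = 0 ↔
      Matrix.vecMul x E = 0 ∧ Matrix.vecMul x B = 0 ∧
        z = Matrix.vecMul x (C * W⁻¹) := by
    intro x z
    have e : Matrix.vecMul (Sum.elim x z) (Matrix.fromBlocks E (Matrix.fromCols (-Bx) (-C))
        0 (Matrix.fromCols (-Bz) W)) = Sum.elim (Matrix.vecMul x E)
          (Sum.elim (-(Matrix.vecMul x Bx + Matrix.vecMul z Bz))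
            (Matrix.vecMul z W - Matrix.vecMul x C)) := by
      rw [Matrix.vecMul_fromBlocks]
      simp only [Sum.elim_comp_inl, Sum.elim_comp_inr, Matrix.vecMul_fromCols,
        Matrix.vecMul_zero, add_zero, Matrix.vecMul_neg]
      ext i
      rcases i with i | i | i <;> simp <;> ring
    have hz : Matrix.vecMul z W - Matrix.vecMul x C = 0 ↔ z = Matrix.vecMul x (C * W⁻¹) := by
      rw [sub_eq_zero, ← Matrix.vecMul_vecMul]
      constructor
      · intro h
        rw [← h, Matrix.vecMul_vecMul, Matrix.mul_nonsing_inv _ hdet, Matrix.vecMul_one]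
      · intro h
        rw [h, Matrix.vecMul_vecMul, Matrix.nonsing_inv_mul _ hdet, Matrix.vecMul_one]
    have split : ∀ {a b : Type} (f : a → ℂ) (g : b → ℂ), Sum.elim f g = 0 ↔ f = 0 ∧ g = 0 := by
      intro a b f g
      constructor
      · intro h
        exact ⟨funext fun i => congrFun h (Sum.inl i), funext fun i => congrFun h (Sum.inr i)⟩
      · rintro ⟨rfl, rfl⟩
        ext i
        rcases i with i | i <;> rfl
    rw [e, split, split, hz, neg_eq_zero]
    refine and_congr_right fun _ => and_congr_left fun h => ?_
    rw [hB, Matrix.vecMul_add, h, Matrix.vecMul_vecMul]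
  have split2 : ∀ x : Fin Mx → ℂ, Matrix.vecMul x (Matrix.fromCols E B) = 0 ↔
      Matrix.vecMul x E = 0 ∧ Matrix.vecMul x B = 0 := by
    intro x
    rw [Matrix.vecMul_fromCols]
    constructor
    · intro h
      exact ⟨funext fun i => congrFun h (Sum.inl i), funext fun i => congrFun h (Sum.inr i)⟩
    · rintro ⟨h1, h2⟩
      rw [h1, h2]
      ext i
      rcases i with i | i <;> rfl
  constructor
  · intro h v hv
    rw [← Sum.elim_comp_inl_inr v] at hv
    obtain ⟨h1, h2, h3⟩ := (key _ _).mp hv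
    have h0 := h _ ((split2 _).mpr ⟨h1, h2⟩)
    rw [h0, Matrix.zero_vecMul] at h3
    ext i
    rcases i with i | i
    · exact congrFun h0 i
    · exact congrFun h3 i
  · intro h x hx
    obtain ⟨h1, h2⟩ := (split2 x).mp hx
    have := h _ ((key x _).mpr ⟨h1, h2, rfl⟩)
    exact funext fun i => congrFun this (Sum.inl i)
end

section
/- Assume the generalized-LFT setting: with W_1 = (M − P_1 H)^{-1} P_1 G and W_2 = (N − P_2 S)^{-1} P_2 K, define E = E_0 + F_1 W_1, A_xx = A_xx^0 + F_2 W_1, A_zx = A_zx^0 + F_4 W_1, A_xv = A_xv^0 + J_1 W_2, A_zv = A_zv^0 + J_3 W_2. Then for every complex λ_0, the matrix Θ(λ_0) = [[λ_0 E − A_xx, −A_xv],[−Φ A_zx, I_{M_v} − Φ A_zv]] has full column rank if and only if the matrix Θ_p(λ_0) = [[λ_0 E_0 − A_xx^0, λ_0 F_1 − F_2, −A_xv^0, −J_1],[−P_1 G, M − P_1 H, 0, 0],[0, 0, −P_2 K, N − P_2 S],[−Φ A_zx^0, −Φ F_4, I_{M_v} − Φ A_zv^0, −Φ J_3]] has full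 column rank. -/
theorem fcr_iff_aux {m n : Type*} [Fintype m] [Fintype n] [DecidableEq n] (A : Matrix m n ℂ) :
    A.rank = Fintype.card n ↔ ∀ v : n → ℂ, A.mulVec v = 0 → v = 0 := by
  have h := LinearMap.finrank_range_add_finrank_ker A.mulVecLin
  rw [Module.finrank_fintype_fun_eq_card] at h
  have h1 : A.rank = Module.finrank ℂ (LinearMap.range A.mulVecLin) := rfl
  have h2 : (∀ v : n → ℂ, A.mulVec v = 0 → v = 0) ↔ LinearMap.ker A.mulVecLin = ⊥ := by
    rw [LinearMap.ker_eq_bot']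
    rfl
  rw [h2, ← Submodule.finrank_eq_zero, h1]
  omega

theorem solve_iff_aux {q n : ℕ} (D : Matrix (Fin q) (Fin q) ℂ) (hD : IsUnit D)
    (B W : Matrix (Fin q) (Fin n) ℂ) (hW : W = D⁻¹ * B) (x : Fin n → ℂ) (w : Fin q → ℂ) :
    (-B).mulVec x + D.mulVec w = 0 ↔ w = W.mulVec x := by
  have hd : IsUnit D.det := (Matrix.isUnit_iff_isUnit_det D).1 hD
  rw [Matrix.neg_mulVec, neg_add_eq_zero]
  constructor
  · intro h
    rw [hW, ← Matrix.mulVec_mulVec, h, Matrix.mulVec_mulVec, Matrix.nonsing_inv_mul _ hd,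
      Matrix.one_mulVec]
  · rintro rfl
    rw [hW, Matrix.mulVec_mulVec, ← Matrix.mul_assoc, Matrix.mul_nonsing_inv _ hd, Matrix.one_mul]

theorem elim_zero_aux {a b : Type*} (x : a → ℂ) (y : b → ℂ) :
    Sum.elim x y = 0 ↔ x = 0 ∧ y = 0 := by
  rw [← Sum.elim_zero_zero, Sum.elim_eq_iff]

theorem forall_sum_aux {a b : Type*} (p : (a ⊕ b → ℂ) → Prop) :
    (∀ v, p v) ↔ ∀ x y, p (Sum.elim x y) :=
  ⟨fun h x y => h _, fun h v => by
    have := h (v ∘ Sum.inl) (v ∘ Sum.inr)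
    rwa [Sum.elim_comp_inl_inr] at this⟩

/-- **Regularity pencil under generalized LFTs.** With `W₁ = (M − P₁H)⁻¹ P₁G`,
`W₂ = (N − P₂S)⁻¹ P₂K` and `E = E₀ + F₁W₁`, `Axx = Axx₀ + F₂W₁`, `Azx = Azx₀ + F₄W₁`,
`Axv = Axv₀ + J₁W₂`, `Azv = Azv₀ + J₃W₂`, for every complex `λ₀` the matrix `Θ(λ₀)` has
full column rank iff the parameter-affine matrix `Θₚ(λ₀)` has full column rank. -/
theorem lft_regularity_pencil_iff
    (Mx Mv Mz q₁ q₂ r₁ r₂ : ℕ)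
    (E₀ Axx₀ : Matrix (Fin Mx) (Fin Mx) ℂ)
    (Axv₀ : Matrix (Fin Mx) (Fin Mv) ℂ)
    (Azx₀ : Matrix (Fin Mz) (Fin Mx) ℂ)
    (Azv₀ : Matrix (Fin Mz) (Fin Mv) ℂ)
    (Φ : Matrix (Fin Mv) (Fin Mz) ℂ)
    (F₁ F₂ : Matrix (Fin Mx) (Fin q₁) ℂ)
    (F₄ : Matrix (Fin Mz) (Fin q₁) ℂ)
    (J₁ : Matrix (Fin Mx) (Fin q₂) ℂ)
    (J₃ : Matrix (Fin Mz) (Fin q₂) ℂ)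
    (P₁ : Matrix (Fin q₁) (Fin r₁) ℂ)
    (G : Matrix (Fin r₁) (Fin Mx) ℂ)
    (H : Matrix (Fin r₁) (Fin q₁) ℂ)
    (M : Matrix (Fin q₁) (Fin q₁) ℂ)
    (P₂ : Matrix (Fin q₂) (Fin r₂) ℂ)
    (K : Matrix (Fin r₂) (Fin Mv) ℂ)
    (S : Matrix (Fin r₂) (Fin q₂) ℂ)
    (N : Matrix (Fin q₂) (Fin q₂) ℂ)
    (hwp₁ : IsUnit (M - P₁ * H)) (hwp₂ : IsUnit (N - P₂ * S))
    (W₁ : Matrix (Fin q₁) (Fin Mx) ℂ) (hW₁ : W₁ = (M - P₁ * H)⁻¹ * (P₁ * G))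
    (W₂ : Matrix (Fin q₂) (Fin Mv) ℂ) (hW₂ : W₂ = (N - P₂ * S)⁻¹ * (P₂ * K))
    (E Axx : Matrix (Fin Mx) (Fin Mx) ℂ)
    (hE : E = E₀ + F₁ * W₁) (hAxx : Axx = Axx₀ + F₂ * W₁)
    (Azx : Matrix (Fin Mz) (Fin Mx) ℂ) (hAzx : Azx = Azx₀ + F₄ * W₁)
    (Axv : Matrix (Fin Mx) (Fin Mv) ℂ) (hAxv : Axv = Axv₀ + J₁ * W₂)
    (Azv : Matrix (Fin Mz) (Fin Mv) ℂ) (hAzv : Azv = Azv₀ + J₃ * W₂)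
    (lam₀ : ℂ) :
    (Matrix.fromBlocks (lam₀ • E - Axx) (-Axv)
        (-(Φ * Azx)) ((1 : Matrix (Fin Mv) (Fin Mv) ℂ) - Φ * Azv)).rank
      = Mx + Mv ↔
    (Matrix.fromRows
      (Matrix.fromCols
        (Matrix.fromCols (lam₀ • E₀ - Axx₀) (lam₀ • F₁ - F₂))
        (Matrix.fromCols (-Axv₀) (-J₁)))
      (Matrix.fromRows
        (Matrix.fromCols
          (Matrix.fromCols (-(P₁ * G)) (M - P₁ * H))
          (Matrix.fromCols 0 0))
        (Matrix.fromRows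
          (Matrix.fromCols
            (Matrix.fromCols 0 0)
            (Matrix.fromCols (-(P₂ * K)) (N - P₂ * S)))
          (Matrix.fromCols
            (Matrix.fromCols (-(Φ * Azx₀)) (-(Φ * F₄)))
            (Matrix.fromCols ((1 : Matrix (Fin Mv) (Fin Mv) ℂ) - Φ * Azv₀)
              (-(Φ * J₃))))))).rank
      = Mx + q₁ + Mv + q₂ := by
  have c1 : Mx + Mv = Fintype.card (Fin Mx ⊕ Fin Mv) := by simp
  have c2 : Mx + q₁ + Mv + q₂ = Fintype.card ((Fin Mx ⊕ Fin q₁) ⊕ (Fin Mv ⊕ Fin q₂)) := by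
    simp [add_assoc]
  rw [c1, c2, fcr_iff_aux, fcr_iff_aux]
  simp only [forall_sum_aux, Matrix.fromRows_mulVec, Matrix.fromCols_mulVec_sumElim,
    Matrix.fromBlocks_mulVec, elim_zero_aux, Sum.elim_comp_inl, Sum.elim_comp_inr,
    Matrix.zero_mulVec, add_zero, zero_add,
    solve_iff_aux _ hwp₁ _ _ hW₁, solve_iff_aux _ hwp₂ _ _ hW₂]
  have e1 : ∀ x y, (lam₀ • E - Axx).mulVec x + (-Axv).mulVec y =
      (lam₀ • E₀ - Axx₀).mulVec x + (lam₀ • F₁ - F₂).mulVec (W₁.mulVec x)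
        + ((-Axv₀).mulVec y + (-J₁).mulVec (W₂.mulVec y)) := by
    intro x y
    subst hE hAxx hAxv
    simp only [Matrix.mulVec_mulVec, Matrix.sub_mulVec, Matrix.neg_mulVec, Matrix.add_mulVec,
      smul_add, Matrix.sub_mul, Matrix.smul_mul, Matrix.neg_mul]
    abel
  have e2 : ∀ x y, (-(Φ * Azx)).mulVec x + (1 - Φ * Azv).mulVec y =
      (-(Φ * Azx₀)).mulVec x + (-(Φ * F₄)).mulVec (W₁.mulVec x)
        + ((1 - Φ * Azv₀).mulVec y + (-(Φ * J₃)).mulVec (W₂.mulVec y)) := by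
    intro x y
    subst hAzx hAzv
    simp only [Matrix.mulVec_mulVec, Matrix.sub_mulVec, Matrix.neg_mulVec, Matrix.add_mulVec,
      Matrix.mul_add, Matrix.mul_assoc, Matrix.neg_mul]
    abel
  constructor
  · rintro h x w y u ⟨h1, rfl, rfl, h4⟩
    obtain ⟨rfl, rfl⟩ := h x y ⟨(e1 x y).trans h1, (e2 x y).trans h4⟩
    simp
  · rintro h x y ⟨h1, h2⟩
    have := h x _ y _ ⟨(e1 x y).symm.trans h1, rfl, rfl, (e2 x y).symm.trans h2⟩
    exact ⟨this.1.1, this.2.1⟩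
end

section
/- Assume the generalized-LFT setting: with W_1 = (M − P_1 H)^{-1} P_1 G and W_2 = (N − P_2 S)^{-1} P_2 K, define E = E_0 + F_1 W_1, C_x = C_x^0 + F_3 W_1, A_zx = A_zx^0 + F_4 W_1, C_v = C_v^0 + J_2 W_2, A_zv = A_zv^0 + J_3 W_2. Then the matrix Ξ_∞^[o] = [[E, 0],[−C_x, −C_v],[−Φ A_zx, I_{M_v} − Φ A_zv]] has full column rank if and only if the matrix Ξ_{∞,p}^[o] = [[E_0, F_1, 0, 0],[−C_x^0, −F_3, −C_v^0, −J_2],[−P_1 G, M − P_1 H, 0, 0],[0, 0, −P_2 K, N − P_2 S],[−Φ A_zx^0, −Φ F_4, I_{M_v} − Φ A_zv^0, −Φ J_3]] has full column rank. -/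
theorem rank_eq_iff_ker {m n : Type*} [Fintype m] [Fintype n] (A : Matrix m n ℂ) (k : ℕ)
    (hk : Fintype.card n = k) :
    A.rank = k ↔ ∀ v, A.mulVec v = 0 → v = 0 := by
  classical
  have h := LinearMap.finrank_range_add_finrank_ker A.mulVecLin
  rw [Module.finrank_fintype_fun_eq_card, hk] at h
  have h2 : A.rank = k ↔ Module.finrank ℂ (LinearMap.ker A.mulVecLin) = 0 := by
    unfold Matrix.rank
    omega
  rw [h2, Submodule.finrank_eq_zero, LinearMap.ker_eq_bot']
  rfl

theorem sum_elim_eq_zero_iff {m n : Type*} (a : m → ℂ) (b : n → ℂ) :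
    Sum.elim a b = 0 ↔ a = 0 ∧ b = 0 := by
  constructor
  · intro h
    exact ⟨funext fun i => congrFun h (Sum.inl i), funext fun i => congrFun h (Sum.inr i)⟩
  · rintro ⟨rfl, rfl⟩
    ext (i | i) <;> rfl

theorem forall_sum_fun {m n : Type*} (p : (m ⊕ n → ℂ) → Prop) :
    (∀ v, p v) ↔ ∀ a b, p (Sum.elim a b) := by
  constructor
  · intro h a b
    exact h _
  · intro h v
    rw [← Sum.elim_comp_inl_inr v]
    exact h _ _

theorem solve_block {q n : ℕ} (M : Matrix (Fin q) (Fin q) ℂ) (hM : IsUnit M)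
    (B : Matrix (Fin q) (Fin n) ℂ) (x : Fin n → ℂ) (w : Fin q → ℂ) :
    -(B.mulVec x) + M.mulVec w = 0 ↔ w = (M⁻¹ * B).mulVec x := by
  have hd := (Matrix.isUnit_iff_isUnit_det M).1 hM
  constructor
  · intro h
    have h1 : M.mulVec w = B.mulVec x := by
      rw [neg_add_eq_zero] at h
      exact h.symm
    rw [← Matrix.mulVec_mulVec, ← h1, Matrix.mulVec_mulVec, Matrix.nonsing_inv_mul _ hd,
      Matrix.one_mulVec]
  · rintro rfl
    rw [Matrix.mulVec_mulVec, Matrix.mul_nonsing_inv_cancel_left _ _ hd, neg_add_cancel]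

/-- **Condition at infinity under generalized LFTs.** With `W₁ = (M − P₁H)⁻¹ P₁G`,
`W₂ = (N − P₂S)⁻¹ P₂K` and `E = E₀ + F₁W₁`, `Cx = Cx₀ + F₃W₁`, `Azx = Azx₀ + F₄W₁`,
`Cv = Cv₀ + J₂W₂`, `Azv = Azv₀ + J₃W₂`, the matrix `Ξ∞⁽ᵒ⁾` has full column rank iff the
parameter-affine matrix `Ξ∞,ₚ⁽ᵒ⁾` has full column rank. -/
theorem lft_observability_infinity_iff
    (Mx Mv Mz My q₁ q₂ r₁ r₂ : ℕ)
    (E₀ : Matrix (Fin Mx) (Fin Mx) ℂ)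
    (Azx₀ : Matrix (Fin Mz) (Fin Mx) ℂ)
    (Azv₀ : Matrix (Fin Mz) (Fin Mv) ℂ)
    (Cx₀ : Matrix (Fin My) (Fin Mx) ℂ)
    (Cv₀ : Matrix (Fin My) (Fin Mv) ℂ)
    (Φ : Matrix (Fin Mv) (Fin Mz) ℂ)
    (F₁ : Matrix (Fin Mx) (Fin q₁) ℂ)
    (F₃ : Matrix (Fin My) (Fin q₁) ℂ)
    (F₄ : Matrix (Fin Mz) (Fin q₁) ℂ)
    (J₂ : Matrix (Fin My) (Fin q₂) ℂ)
    (J₃ : Matrix (Fin Mz) (Fin q₂) ℂ)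
    (P₁ : Matrix (Fin q₁) (Fin r₁) ℂ)
    (G : Matrix (Fin r₁) (Fin Mx) ℂ)
    (H : Matrix (Fin r₁) (Fin q₁) ℂ)
    (M : Matrix (Fin q₁) (Fin q₁) ℂ)
    (P₂ : Matrix (Fin q₂) (Fin r₂) ℂ)
    (K : Matrix (Fin r₂) (Fin Mv) ℂ)
    (S : Matrix (Fin r₂) (Fin q₂) ℂ)
    (N : Matrix (Fin q₂) (Fin q₂) ℂ)
    (hwp₁ : IsUnit (M - P₁ * H)) (hwp₂ : IsUnit (N - P₂ * S))
    (W₁ : Matrix (Fin q₁) (Fin Mx) ℂ) (hW₁ : W₁ = (M - P₁ * H)⁻¹ * (P₁ * G))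
    (W₂ : Matrix (Fin q₂) (Fin Mv) ℂ) (hW₂ : W₂ = (N - P₂ * S)⁻¹ * (P₂ * K))
    (E : Matrix (Fin Mx) (Fin Mx) ℂ) (hE : E = E₀ + F₁ * W₁)
    (Cx : Matrix (Fin My) (Fin Mx) ℂ) (hCx : Cx = Cx₀ + F₃ * W₁)
    (Azx : Matrix (Fin Mz) (Fin Mx) ℂ) (hAzx : Azx = Azx₀ + F₄ * W₁)
    (Cv : Matrix (Fin My) (Fin Mv) ℂ) (hCv : Cv = Cv₀ + J₂ * W₂)
    (Azv : Matrix (Fin Mz) (Fin Mv) ℂ) (hAzv : Azv = Azv₀ + J₃ * W₂) :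
    (Matrix.fromRows
        (Matrix.fromBlocks E 0 (-Cx) (-Cv))
        (Matrix.fromCols (-(Φ * Azx)) ((1 : Matrix (Fin Mv) (Fin Mv) ℂ) - Φ * Azv))).rank
      = Mx + Mv ↔
    (Matrix.fromRows
      (Matrix.fromCols
        (Matrix.fromCols E₀ F₁)
        (Matrix.fromCols 0 0))
      (Matrix.fromRows
        (Matrix.fromCols
          (Matrix.fromCols (-Cx₀) (-F₃))
          (Matrix.fromCols (-Cv₀) (-J₂)))
        (Matrix.fromRows
          (Matrix.fromCols
            (Matrix.fromCols (-(P₁ * G)) (M - P₁ * H))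
            (Matrix.fromCols 0 0))
          (Matrix.fromRows
            (Matrix.fromCols
              (Matrix.fromCols 0 0)
              (Matrix.fromCols (-(P₂ * K)) (N - P₂ * S)))
            (Matrix.fromCols
              (Matrix.fromCols (-(Φ * Azx₀)) (-(Φ * F₄)))
              (Matrix.fromCols ((1 : Matrix (Fin Mv) (Fin Mv) ℂ) - Φ * Azv₀)
                (-(Φ * J₃)))))))).rank
      = Mx + q₁ + Mv + q₂ := by
  rw [rank_eq_iff_ker _ _ (by simp), rank_eq_iff_ker _ _ (by simp; ring)]
  rw [← Matrix.fromRows_fromCols_eq_fromBlocks]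
  simp only [forall_sum_fun, Matrix.fromRows_mulVec, Matrix.fromCols_mulVec_sumElim,
    sum_elim_eq_zero_iff, Matrix.zero_mulVec, add_zero, zero_add, Matrix.neg_mulVec]
  simp only [solve_block _ hwp₁, solve_block _ hwp₂, ← hW₁, ← hW₂]
  have key : ∀ (x : Fin Mx → ℂ) (v : Fin Mv → ℂ),
      ((E.mulVec x = 0 ∧ -(Cx.mulVec x) + -(Cv.mulVec v) = 0) ∧
        -((Φ * Azx).mulVec x) + (1 - Φ * Azv).mulVec v = 0) ↔
      (E₀.mulVec x + F₁.mulVec (W₁.mulVec x) = 0 ∧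
        -(Cx₀.mulVec x) + -(F₃.mulVec (W₁.mulVec x))
          + (-(Cv₀.mulVec v) + -(J₂.mulVec (W₂.mulVec v))) = 0 ∧
        -((Φ * Azx₀).mulVec x) + -((Φ * F₄).mulVec (W₁.mulVec x))
          + ((1 - Φ * Azv₀).mulVec v + -((Φ * J₃).mulVec (W₂.mulVec v))) = 0) := by
    intro x v
    subst hE hCx hAzx hCv hAzv
    simp only [Matrix.add_mulVec, Matrix.sub_mulVec, Matrix.mul_add, Matrix.mulVec_mulVec,
      Matrix.mul_assoc, neg_add, and_assoc]
    have e : ∀ a b c d f : Fin Mv → ℂ, -a + -b + (c - (d + f)) = -a + -b + (c - d + -f) := by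
      intros; abel
    rw [e]
  constructor
  · rintro h x w₁ v w₂ ⟨h1, h2, rfl, rfl, h5⟩
    obtain ⟨rfl, rfl⟩ := h x v ((key x v).2 ⟨h1, h2, h5⟩)
    simp
  · intro h x v hxv
    obtain ⟨h1, h2, h5⟩ := (key x v).1 hxv
    have := h x _ v _ ⟨h1, h2, rfl, rfl, h5⟩
    exact ⟨this.1.1, this.2.1⟩
end
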